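/- Let γ : ℝ → ℝ² (Euclidean plane) be twice continuously differentiable with ‖γ'(s)‖ = 1 for all s (arc-length parametrization), fix s₀ ∈ ℝ, and assume γ''(s₀) ≠ 0; let ρ = 1/‖γ''(s₀)‖ be the radius of curvature at γ(s₀). Then i² / (2 · dist(γ(s₀ + i), γ(s₀) + i·γ'(s₀))) tends to ρ as i tends to 0 through nonzero values. -/

import Mathlib

open Real Filter

/-- Second-order Taylor expansion of a `C²` map on the real line, as a limit of quotients. -/
theorem tendsto_inv_sq_smul_taylor_two {E : Type*} [NormedAddCommGroup E] [NormedSpace ℝ E]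
    {f : ℝ → E} (hf : ContDiff ℝ 2 f) (x₀ : ℝ) :
    Tendsto (fun h : ℝ => (h ^ 2)⁻¹ • (f (x₀ + h) - (f x₀ + h • deriv f x₀)))
      (nhdsWithin 0 {0}ᶜ) (nhds ((2 : ℝ)⁻¹ • deriv (deriv f) x₀)) := by
  have hT := taylor_isLittleO_univ (x₀ := x₀) (n := 2) hf
  have hshift : Tendsto (fun h : ℝ => x₀ + h) (nhdsWithin 0 {0}ᶜ) (nhds x₀) := by
    have : Tendsto (fun h : ℝ => x₀ + h) (nhds 0) (nhds (x₀ + 0)) :=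
      (continuous_const.add continuous_id).tendsto 0
    rw [add_zero] at this
    exact this.mono_left nhdsWithin_le_nhds
  have hlim := ((hT.comp_tendsto hshift).tendsto_inv_smul_nhds_zero).add_const
    ((2 : ℝ)⁻¹ • deriv (deriv f) x₀)
  rw [zero_add] at hlim
  refine hlim.congr' ?_
  filter_upwards [self_mem_nhdsWithin] with h hh
  have hh : h ≠ 0 := hh
  simp only [Function.comp_apply, taylorWithinEval_succ, taylor_within_zero_eval,
    iteratedDerivWithin_univ, add_sub_cancel_left, iteratedDeriv_succ, iteratedDeriv_zero]
  have key : (2 : ℝ)⁻¹ • deriv (deriv f) x₀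
      = (h ^ 2)⁻¹ • ((2 : ℝ)⁻¹ * h ^ 2) • deriv (deriv f) x₀ := by
    rw [smul_smul]
    congr 1
    field_simp
  rw [key, ← smul_add]
  congr 1
  norm_num
  module

theorem cauchy_radius_of_curvature (γ : ℝ → EuclideanSpace ℝ (Fin 2))
    (hγ : ContDiff ℝ 2 γ) (hunit : ∀ s : ℝ, ‖deriv γ s‖ = 1) (s₀ : ℝ)
    (hcurv : deriv (deriv γ) s₀ ≠ 0) :
    Tendsto
      (fun i : ℝ => i ^ 2 / (2 * dist (γ (s₀ + i)) (γ s₀ + i • deriv γ s₀)))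
      (nhdsWithin 0 {0}ᶜ) (nhds (1 / ‖deriv (deriv γ) s₀‖)) := by
  have hlim := ((tendsto_inv_sq_smul_taylor_two hγ s₀).norm.const_mul 2).inv₀
    (by rw [norm_smul]; norm_num [hcurv])
  convert hlim using 2 with i
  · rw [norm_smul, dist_eq_norm, norm_inv, norm_pow, Real.norm_eq_abs, sq_abs,
      mul_left_comm, mul_inv, inv_inv, div_eq_mul_inv]
  · rw [norm_smul, norm_inv, Real.norm_ofNat, mul_inv_cancel_left₀ two_ne_zero, one_div]
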